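/- Let H be a real Hilbert space, f : H → ℝ ∪ {+∞} a proper convex lower semicontinuous function with Fenchel conjugate f*(y) := sup_x (⟨x, y⟩ − f(x)), ρ a nonzero real number, and v ∈ H. Let p be the unique minimizer of z ↦ f(ρ z) + (1/2)‖z − v‖² and q the unique minimizer of z ↦ f*(z/ρ) + (1/2)‖z − v‖². Then p + q = v (the simplified Moreau decomposition v = Prox_{fρ}(v) + Prox_{f*(1/ρ)}(v)). -/

import Mathlib

open scoped RealInnerProductSpace

/-!
For `ρ ≠ 0` the conjugate of `f (ρ •)` is `f* (ρ⁻¹ •)`, so it is enough to treat `g := f (ρ •)` with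
parameter `1`. Minimality of `p` says `v - p ∈ ∂g(p)`; conjugation inverts the subdifferential, so
`p = v - (v - p) ∈ ∂g*(v - p)`. Hence `v - p` minimizes `z ↦ g* z + (1/2)‖z - v‖²`, and by strong
convexity it is the only minimizer.
-/

/-- Convexity of an extended-real-valued function. Mathlib's `ConvexOn` would need a scalar action
on `EReal`; here the coefficients are coerced, with the convention `0 * ⊤ = 0`. -/
def ERealConvex {E : Type*} [AddCommGroup E] [Module ℝ E] (f : E → EReal) : Prop :=
  ∀ x y : E, ∀ t : ℝ, 0 ≤ t → t ≤ 1 →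
    f (t • x + (1 - t) • y) ≤ ((t : ℝ) : EReal) * f x + ((1 - t : ℝ) : EReal) * f y

theorem ERealConvex.comp_linearMap {E F : Type*} [AddCommGroup E] [Module ℝ E] [AddCommGroup F]
    [Module ℝ F] {f : F → EReal} (hf : ERealConvex f) (L : E →ₗ[ℝ] F) :
    ERealConvex fun x => f (L x) := by
  intro x y t ht₀ ht₁
  simpa only [map_add, map_smul] using hf (L x) (L y) t ht₀ ht₁

section Proximal

variable {E : Type*} [SeminormedAddCommGroup E] {f : E → EReal} {p v : E}

/-- `p` is a proximal point of `f` at `v`, i.e. a minimizer of `z ↦ f z + (1/2)‖z - v‖²`.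
The operator with parameter `ρ` is obtained from the function `z ↦ f (ρ • z)`. -/
def IsProx (f : E → EReal) (v p : E) : Prop :=
  ∀ z : E, f p + ((1 / 2 * ‖p - v‖ ^ 2 : ℝ) : EReal) ≤ f z + ((1 / 2 * ‖z - v‖ ^ 2 : ℝ) : EReal)

theorem IsProx.ne_top (hp : IsProx f v p) (hf : ∃ x, f x ≠ ⊤) : f p ≠ ⊤ := by
  obtain ⟨x, hx⟩ := hf
  intro hp_top
  have hle := hp x
  rw [hp_top, EReal.top_add_coe, top_le_iff] at hle
  exact EReal.add_ne_top hx (EReal.coe_ne_top _) hle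

theorem IsProx.ne_bot (hp : IsProx f v p) (hfp : f p ≠ ⊥) (z : E) : f z ≠ ⊥ := by
  intro hz
  have hle := hp z
  rw [hz, EReal.bot_add, le_bot_iff, EReal.add_eq_bot_iff] at hle
  exact hle.elim hfp (EReal.coe_ne_bot _)

end Proximal

section Subgradient

variable {E : Type*} [SeminormedAddCommGroup E] [InnerProductSpace ℝ E]
  {f : E → EReal} {p s v x z : E}

/-- The Fenchel conjugate `f* y = sup_x (⟨x, y⟩ - f x)`. -/
noncomputable def fenchelConjugate (f : E → EReal) (y : E) : EReal :=
  ⨆ x : E, ((⟪x, y⟫ : ℝ) : EReal) - f x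

/-- `s` is a subgradient of `f` at `x`, i.e. `s ∈ ∂f(x)`. The value `f x` may be infinite: at a
point where `f x = ⊥` every vector is a subgradient, and where `f x = ⊤` there is none unless `f`
is constantly `⊤`. -/
def HasSubgradientAt (f : E → EReal) (s x : E) : Prop :=
  ∀ y : E, f x + ((⟪s, y - x⟫ : ℝ) : EReal) ≤ f y

theorem fenchelConjugate_comp_smul {ρ : ℝ} (hρ : ρ ≠ 0) (f : E → EReal) (y : E) :
    fenchelConjugate (fun x => f (ρ • x)) y = fenchelConjugate f (ρ⁻¹ • y) :=
  (MulAction.surjective₀ hρ).iSup_congr (ρ • ·) fun x => by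
    rw [real_inner_smul_left, real_inner_smul_right, mul_inv_cancel_left₀ hρ]

theorem inner_sub_le_fenchelConjugate (f : E → EReal) (x y : E) :
    ((⟪x, y⟫ : ℝ) : EReal) - f x ≤ fenchelConjugate f y :=
  le_iSup (fun x => ((⟪x, y⟫ : ℝ) : EReal) - f x) x

theorem HasSubgradientAt.fenchelConjugate_eq (h : HasSubgradientAt f s x) :
    fenchelConjugate f s = ((⟪x, s⟫ : ℝ) : EReal) - f x := by
  refine le_antisymm (iSup_le fun y => ?_) (inner_sub_le_fenchelConjugate f x s)
  have hinner : ⟪y, s⟫ = ⟪x, s⟫ + ⟪s, y - x⟫ := by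
    rw [inner_sub_right, real_inner_comm s x, real_inner_comm s y]; ring
  calc ((⟪y, s⟫ : ℝ) : EReal) - f y
      ≤ ((⟪y, s⟫ : ℝ) : EReal) - (f x + ((⟪s, y - x⟫ : ℝ) : EReal)) :=
        EReal.sub_le_sub le_rfl (h y)
    _ = ((⟪x, s⟫ : ℝ) : EReal) - f x := by
        induction f x with
        | bot => simp
        | top => simp
        | coe a => rw [hinner]; norm_cast; ring

protected theorem HasSubgradientAt.fenchelConjugate (h : HasSubgradientAt f s x) :
    HasSubgradientAt (fenchelConjugate f) x s := by
  intro y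
  calc fenchelConjugate f s + ((⟪x, y - s⟫ : ℝ) : EReal)
      = ((⟪x, s⟫ + ⟪x, y - s⟫ : ℝ) : EReal) - f x := by
        rw [h.fenchelConjugate_eq, sub_eq_add_neg, add_right_comm, ← EReal.coe_add,
          ← sub_eq_add_neg]
    _ = ((⟪x, y⟫ : ℝ) : EReal) - f x := by rw [← inner_add_right, add_sub_cancel]
    _ ≤ fenchelConjugate f y := inner_sub_le_fenchelConjugate f x y

theorem half_norm_sub_sq_eq (p v z : E) :
    1 / 2 * ‖z - v‖ ^ 2 = 1 / 2 * ‖p - v‖ ^ 2 - ⟪v - p, z - p⟫ + 1 / 2 * ‖z - p‖ ^ 2 := by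
  rw [← sub_sub_sub_cancel_right z v p, norm_sub_sq_real, norm_sub_rev v p,
    real_inner_comm (v - p) (z - p)]
  ring

theorem HasSubgradientAt.add_half_norm_sub_sq_le (h : HasSubgradientAt f (v - p) p) (z : E) :
    f p + ((1 / 2 * ‖p - v‖ ^ 2 + 1 / 2 * ‖z - p‖ ^ 2 : ℝ) : EReal) ≤
      f z + ((1 / 2 * ‖z - v‖ ^ 2 : ℝ) : EReal) :=
  calc f p + ((1 / 2 * ‖p - v‖ ^ 2 + 1 / 2 * ‖z - p‖ ^ 2 : ℝ) : EReal)
      = f p + ((⟪v - p, z - p⟫ : ℝ) : EReal) + ((1 / 2 * ‖z - v‖ ^ 2 : ℝ) : EReal) := by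
        rw [add_assoc, ← EReal.coe_add, half_norm_sub_sq_eq p v z]
        congr 2
        ring
    _ ≤ f z + ((1 / 2 * ‖z - v‖ ^ 2 : ℝ) : EReal) := by gcongr; exact h z

theorem IsProx.add_inner_le_add_mul (hp : IsProx f v p) (hf : ERealConvex f) {a c t : ℝ}
    (ha : f p = a) (hc : f z = c) (ht₀ : 0 < t) (ht₁ : t ≤ 1) :
    a + ⟪v - p, z - p⟫ ≤ c + t * (1 / 2 * ‖z - p‖ ^ 2) := by
  -- Compare `p` with the point `w` of the segment from `p` to `z`, and divide by `t`.
  set w : E := t • z + (1 - t) • p with hw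
  have hmin : a + 1 / 2 * ‖p - v‖ ^ 2 ≤ t * c + (1 - t) * a + 1 / 2 * ‖w - v‖ ^ 2 := by
    have hle := (hp w).trans (add_le_add_left (hf z p t ht₀.le ht₁) _)
    rw [ha, hc] at hle
    exact_mod_cast hle
  have hwp : w - p = t • (z - p) := by rw [hw]; module
  have hnorm : 1 / 2 * ‖w - v‖ ^ 2 =
      1 / 2 * ‖p - v‖ ^ 2 - t * ⟪v - p, z - p⟫ + t ^ 2 * (1 / 2 * ‖z - p‖ ^ 2) := by
    rw [half_norm_sub_sq_eq p v w, hwp, real_inner_smul_right, norm_smul, mul_pow,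
      Real.norm_eq_abs, sq_abs]
    ring
  refine le_of_mul_le_mul_left ?_ ht₀
  linarith

theorem IsProx.hasSubgradientAt (hp : IsProx f v p) (hf : ERealConvex f) (htop : f p ≠ ⊤)
    (hbot : f p ≠ ⊥) : HasSubgradientAt f (v - p) p := by
  intro z
  by_cases hz : f z = ⊤
  · exact hz ▸ le_top
  have ha : f p = (f p).toReal := (EReal.coe_toReal htop hbot).symm
  have hc : f z = (f z).toReal := (EReal.coe_toReal hz (hp.ne_bot hbot z)).symm
  have hlim : Filter.Tendsto (fun t : ℝ => (f z).toReal + t * (1 / 2 * ‖z - p‖ ^ 2))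
      (nhdsWithin 0 (Set.Ioi 0)) (nhds (f z).toReal) := by
    refine tendsto_nhdsWithin_of_tendsto_nhds (Continuous.tendsto' (by fun_prop) _ _ ?_)
    rw [zero_mul, add_zero]
  have hle : (f p).toReal + ⟪v - p, z - p⟫ ≤ (f z).toReal := by
    refine ge_of_tendsto hlim ?_
    filter_upwards [Ioc_mem_nhdsGT zero_lt_one] with t ht
    exact hp.add_inner_le_add_mul hf ha hc ht.1 ht.2
  rw [ha, hc]
  exact_mod_cast hle

end Subgradient

section Moreau

variable {E : Type*} [NormedAddCommGroup E] [InnerProductSpace ℝ E] {f : E → EReal} {p q v : E}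

theorem IsProx.eq_of_hasSubgradientAt (hq : IsProx f v q) (hp : HasSubgradientAt f (v - p) p)
    (htop : f p ≠ ⊤) (hbot : f p ≠ ⊥) : q = p := by
  have hle := (hp.add_half_norm_sub_sq_le q).trans (hq p)
  rw [← EReal.coe_toReal htop hbot] at hle
  norm_cast at hle
  have hsq : ‖q - p‖ ^ 2 = 0 := le_antisymm (by linarith) (sq_nonneg _)
  exact sub_eq_zero.mp (norm_eq_zero.mp (pow_eq_zero_iff two_ne_zero |>.mp hsq))

theorem IsProx.add_eq_of_fenchelConjugate (hp : IsProx f v p)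
    (hq : IsProx (fenchelConjugate f) v q) (hf : ERealConvex f) (htop : f p ≠ ⊤)
    (hbot : f p ≠ ⊥) : p + q = v := by
  have hsub : HasSubgradientAt f (v - p) p := hp.hasSubgradientAt hf htop hbot
  have hsub_conj : HasSubgradientAt (fenchelConjugate f) (v - (v - p)) (v - p) := by
    rw [sub_sub_cancel]
    exact hsub.fenchelConjugate
  have hconj : fenchelConjugate f (v - p) = ((⟪p, v - p⟫ - (f p).toReal : ℝ) : EReal) := by
    rw [hsub.fenchelConjugate_eq, EReal.coe_sub, EReal.coe_toReal htop hbot]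
  rw [hq.eq_of_hasSubgradientAt hsub_conj (hconj ▸ EReal.coe_ne_top _)
    (hconj ▸ EReal.coe_ne_bot _), add_sub_cancel]

theorem stmt_7_general (hconv : ERealConvex f) (hproper : ∃ x, f x ≠ ⊤) (hnobot : ∀ x, f x ≠ ⊥)
    {ρ : ℝ} (hρ : ρ ≠ 0) (hp : IsProx (fun z => f (ρ • z)) v p)
    (hq : IsProx (fun z => fenchelConjugate f (ρ⁻¹ • z)) v q) : p + q = v := by
  have hconv_scaled : ERealConvex fun z => f (ρ • z) :=
    hconv.comp_linearMap (LinearMap.lsmul ℝ E ρ)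
  have hproper_scaled : ∃ z, f (ρ • z) ≠ ⊤ := by
    obtain ⟨x, hx⟩ := hproper
    exact ⟨ρ⁻¹ • x, by rwa [smul_inv_smul₀ hρ]⟩
  rw [← funext (fenchelConjugate_comp_smul hρ f)] at hq
  exact hp.add_eq_of_fenchelConjugate hq hconv_scaled (hp.ne_top hproper_scaled) (hnobot _)

end Moreau

/-- simplified Moreau decomposition `v = Prox_{fρ}(v) + Prox_{f*(1/ρ)}(v)`.
Here `f : H → ℝ ∪ {+∞}` is CCP with Fenchel conjugate `f*(y) = sup_x (⟨x,y⟩ − f(x))`,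
`ρ ≠ 0`, `p` is the (unique) minimizer of `z ↦ f(ρ z) + (1/2)‖z − v‖²` and `q` is the
(unique) minimizer of `z ↦ f*(z/ρ) + (1/2)‖z − v‖²`; then `p + q = v`. -/
theorem stmt_7 {H : Type*} [NormedAddCommGroup H] [InnerProductSpace ℝ H] [CompleteSpace H]
    (f : H → EReal)
    (hconv : ∀ x y : H, ∀ t : ℝ, 0 ≤ t → t ≤ 1 →
      f (t • x + (1 - t) • y) ≤ ((t : ℝ) : EReal) * f x + (((1 - t : ℝ)) : EReal) * f y)
    (hlsc : LowerSemicontinuous f)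
    (hproper : ∃ x, f x ≠ ⊤) (hnobot : ∀ x, f x ≠ ⊥)
    (fstar : H → EReal)
    (hfstar : ∀ y : H, fstar y = ⨆ x : H, ((⟪x, y⟫ : ℝ) : EReal) - f x)
    (ρ : ℝ) (hρ : ρ ≠ 0) (v : H) (p q : H)
    (hp : ∀ z : H, f (ρ • p) + (((1 : ℝ) / 2 * ‖p - v‖ ^ 2 : ℝ) : EReal) ≤
        f (ρ • z) + (((1 : ℝ) / 2 * ‖z - v‖ ^ 2 : ℝ) : EReal))
    (hq : ∀ z : H, fstar (ρ⁻¹ • q) + (((1 : ℝ) / 2 * ‖q - v‖ ^ 2 : ℝ) : EReal) ≤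
        fstar (ρ⁻¹ • z) + (((1 : ℝ) / 2 * ‖z - v‖ ^ 2 : ℝ) : EReal)) :
    p + q = v := by
  obtain rfl : fstar = fenchelConjugate f := funext hfstar
  exact stmt_7_general hconv hproper hnobot hρ hp hq
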